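/- Let $p$ be an odd prime and $F$ a field of characteristic $p$. The group algebra $F[C_2 \wr S_n]$ is Morita equivalent to the direct sum $\bigoplus_{i=0}^n F[S_i \times S_{n-i}]$. -/

import Mathlib

/-!
STATEMENT 11: Let `p` be an odd prime and `F` a field of characteristic `p`.  The
group algebra `F[C₂ ≀ Sₙ]` is Morita equivalent to `⊕_{i=0}^n F[Sᵢ × S_{n-i}]`.

We realize `C₂ ≀ Sₙ` as the centraliser of the bar involution on `Fin n × Bool`,
the direct sum of the group algebras as the product ring
`Π i : Fin (n+1), F[S_i × S_{n-i}]`, and Morita equivalence as an equivalence of the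
categories of modules.
-/

def barPerm (n : ℕ) : Equiv.Perm (Fin n × Bool) :=
  Function.Involutive.toPerm (fun x => (x.1, !x.2)) (by intro x; simp)

def hyperoct (n : ℕ) : Subgroup (Equiv.Perm (Fin n × Bool)) :=
  Subgroup.centralizer {barPerm n}

section MoritaCorner

open CategoryTheory

variable {A B : Type} [Ring A] [Ring B] (φ : B →ₙ+* A)

/-- The corner `e M` of an `A`-module, where `e = φ 1`. -/
def Corner (M : Type) [AddCommGroup M] [Module A M] : AddSubgroup M where
  carrier := {m | φ 1 • m = m}
  zero_mem' := by simp
  add_mem' := by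
    intro a b ha hb
    simp only [Set.mem_ofPred_eq] at *
    rw [smul_add, ha, hb]
  neg_mem' := by
    intro a ha
    simp only [Set.mem_ofPred_eq] at *
    rw [smul_neg, ha]

theorem mem_corner {M : Type} [AddCommGroup M] [Module A M] {m : M} :
    m ∈ Corner φ M ↔ φ 1 • m = m := Iff.rfl

theorem smul_mem_corner {M : Type} [AddCommGroup M] [Module A M] (b : B) (m : M) :
    φ b • m ∈ Corner φ M := by
  rw [mem_corner, smul_smul, ← map_mul, one_mul]

instance cornerModule (M : Type) [AddCommGroup M] [Module A M] : Module B (Corner φ M) where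
  smul b m := ⟨φ b • (m : M), smul_mem_corner φ b _⟩
  one_smul m := Subtype.ext m.2
  mul_smul a b m := Subtype.ext (by
    change φ (a * b) • (m : M) = φ a • φ b • (m : M)
    rw [map_mul, mul_smul])
  smul_zero a := Subtype.ext (smul_zero (φ a))
  smul_add a x y := Subtype.ext (smul_add (φ a) (x : M) (y : M))
  add_smul a b x := Subtype.ext (by
    change φ (a + b) • (x : M) = φ a • (x : M) + φ b • (x : M)
    rw [map_add, add_smul])
  zero_smul x := Subtype.ext (by
    change φ 0 • (x : M) = 0
    rw [map_zero, zero_smul])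

theorem corner_coe_smul {M : Type} [AddCommGroup M] [Module A M] (b : B) (m : Corner φ M) :
    ((b • m : Corner φ M) : M) = φ b • (m : M) := rfl

/-- Restriction of a linear map to corners. -/
def cornerMap {M N : Type} [AddCommGroup M] [Module A M] [AddCommGroup N] [Module A N]
    (f : M →ₗ[A] N) : Corner φ M →ₗ[B] Corner φ N where
  toFun m := ⟨f m, by
    rw [mem_corner, ← map_smul, (mem_corner φ).1 m.2]⟩
  map_add' x y := Subtype.ext (by simp)
  map_smul' b x := Subtype.ext (by simp [corner_coe_smul])

theorem cornerMap_coe {M N : Type} [AddCommGroup M] [Module A M] [AddCommGroup N] [Module A N]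
    (f : M →ₗ[A] N) (m : Corner φ M) : (cornerMap φ f m : N) = f m := rfl

/-- The functor `M ↦ e M`. -/
def cornerFunctor : ModuleCat.{0} A ⥤ ModuleCat.{0} B where
  obj M := ModuleCat.of B (Corner φ M)
  map f := ModuleCat.ofHom (cornerMap φ f.hom)
  map_id M := by
    ext x
    rfl
  map_comp f g := by
    ext x
    rfl

/-- The coinduced module: additive maps `A → N` that are `B`-semilinear along `φ`. -/
def Coind (N : Type) [AddCommGroup N] [Module B N] : AddSubgroup (A →+ N) where
  carrier := {h | ∀ b x, h (φ b * x) = b • h x}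
  zero_mem' := by simp
  add_mem' := by
    intro f g hf hg b x
    simp [hf b x, hg b x]
  neg_mem' := by
    intro f hf b x
    simp [hf b x]

instance coindModule (N : Type) [AddCommGroup N] [Module B N] : Module A (Coind φ N) where
  smul a h := ⟨(h : A →+ N).comp (AddMonoidHom.mulRight a), by
    intro b x
    have := h.2 b (x * a)
    simpa [mul_assoc] using this⟩
  one_smul h := Subtype.ext (AddMonoidHom.ext fun x => congrArg h.1 (mul_one x))
  mul_smul a b h := Subtype.ext (AddMonoidHom.ext fun x =>
    congrArg h.1 (mul_assoc x a b).symm)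
  smul_zero a := Subtype.ext (AddMonoidHom.ext fun x => rfl)
  smul_add a f g := Subtype.ext (AddMonoidHom.ext fun x => rfl)
  add_smul a b h := Subtype.ext (AddMonoidHom.ext fun x => by
    change h.1 (x * (a + b)) = h.1 (x * a) + h.1 (x * b)
    rw [mul_add, map_add])
  zero_smul h := Subtype.ext (AddMonoidHom.ext fun x => by
    change h.1 (x * 0) = 0
    rw [mul_zero, map_zero])

theorem coind_smul_apply {N : Type} [AddCommGroup N] [Module B N] (a x : A) (h : Coind φ N) :
    (a • h : Coind φ N).1 x = h.1 (x * a) := rfl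

theorem coind_one_mul {N : Type} [AddCommGroup N] [Module B N] (x : A) (h : Coind φ N) :
    h.1 (φ 1 * x) = h.1 x := by
  rw [h.2, one_smul]

theorem coind_corner_apply {N : Type} [AddCommGroup N] [Module B N]
    (h : Corner φ (Coind φ N)) (x : A) : h.1.1 (x * φ 1) = h.1.1 x := by
  have := h.2
  rw [mem_corner] at this
  rw [← coind_smul_apply, this]

/-- Evaluation at `e`. -/
def cornerEval (N : Type) [AddCommGroup N] [Module B N] :
    Corner φ (Coind φ N) →ₗ[B] N where
  toFun h := h.1.1 (φ 1)
  map_add' f g := rfl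
  map_smul' b h := by
    change h.1.1 (φ 1 * φ b) = b • h.1.1 (φ 1)
    rw [← h.1.2, ← map_mul, ← map_mul, one_mul, mul_one]

theorem cornerEval_bijective (hinj : Function.Injective φ)
    (hsurj : ∀ a, ∃ b, φ b = φ 1 * a * φ 1)
    (N : Type) [AddCommGroup N] [Module B N] :
    Function.Bijective (cornerEval φ N) := by
  constructor
  · rw [injective_iff_map_eq_zero]
    intro h hh
    change h.1.1 (φ 1) = 0 at hh
    refine Subtype.ext (Subtype.ext (AddMonoidHom.ext fun x => ?_))
    change h.1.1 x = 0
    obtain ⟨b, hb⟩ := hsurj x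
    rw [← coind_corner_apply, ← coind_one_mul, ← mul_assoc, ← hb]
    have : φ b = φ b * φ 1 := by rw [← map_mul, mul_one]
    rw [this, h.1.2, hh, smul_zero]
  · intro n
    choose ψ hψ using hsurj
    have ψadd : ∀ x y, ψ (x + y) = ψ x + ψ y := fun x y => hinj (by
      rw [map_add, hψ, hψ, hψ, mul_add, add_mul])
    have ψmul : ∀ b x, ψ (φ b * x) = b * ψ x := fun b x => hinj (by
      rw [map_mul, hψ, hψ, ← mul_assoc, ← mul_assoc, ← mul_assoc, ← map_mul, ← map_mul,
        one_mul, mul_one])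
    have ψe : ∀ x, ψ (x * φ 1) = ψ x := fun x => hinj (by
      rw [hψ, hψ, mul_assoc, mul_assoc, ← map_mul, mul_one, mul_assoc])
    have ψ1 : ψ (φ 1) = 1 := hinj (by rw [hψ, ← map_mul, ← map_mul, mul_one, mul_one])
    let h0 : A →+ N := AddMonoidHom.mk' (fun x => ψ x • n) (fun x y => by
      rw [ψadd, add_smul])
    let h1 : Coind φ N := ⟨h0, fun b x => by
      change ψ (φ b * x) • n = b • ψ x • n
      rw [ψmul, mul_smul]⟩
    refine ⟨⟨h1, ?_⟩, ?_⟩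
    · rw [mem_corner]
      refine Subtype.ext (AddMonoidHom.ext fun x => ?_)
      change ψ (x * φ 1) • n = ψ x • n
      rw [ψe]
    · change ψ (φ 1) • n = n
      rw [ψ1, one_smul]

theorem corner_morita (hinj : Function.Injective φ)
    (hsurj : ∀ a, ∃ b, φ b = φ 1 * a * φ 1)
    {κ : Type} [Fintype κ] (u v : κ → A)
    (huv : ∑ k, u k * φ 1 * v k = 1) :
    Nonempty (ModuleCat.{0} A ≌ ModuleCat.{0} B) := by
  have key : ∀ {M : Type} [AddCommGroup M] [Module A M] (m : M),
      ∑ k, u k • φ 1 • v k • m = m := by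
    intro M _ _ m
    simp only [smul_smul, ← mul_assoc]
    rw [← Finset.sum_smul, huv, one_smul]
  have hfaith : (cornerFunctor φ).Faithful := ⟨by
    intro M N f g hfg
    ext m
    rw [← key m, map_sum, map_sum]
    refine Finset.sum_congr rfl fun k _ => ?_
    rw [map_smul f.hom, map_smul g.hom]
    congr 1
    have h := congrArg (fun q => ((q.hom ⟨φ 1 • v k • m, smul_mem_corner φ 1 _⟩ :
      Corner φ N) : N)) hfg
    exact h⟩
  have hfull : (cornerFunctor φ).Full := ⟨by
    intro M N g
    let g' : Corner φ M →ₗ[B] Corner φ N := g.hom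
    let c : A → M → Corner φ M := fun a m => ⟨φ 1 • a • m, smul_mem_corner φ 1 _⟩
    have cadd : ∀ a x y, c a (x + y) = c a x + c a y := fun a x y =>
      Subtype.ext (by simp [c])
    let f0 : M → N := fun m => ∑ k, u k • (g' (c (v k) m) : N)
    have f0add : ∀ x y, f0 (x + y) = f0 x + f0 y := by
      intro x y
      simp only [f0, cadd, map_add, AddSubgroup.coe_add, smul_add, Finset.sum_add_distrib]
    -- the main identity
    have main : ∀ (a : A) (m : M), (g' (c a m) : N) = φ 1 • a • f0 m := by
      intro a m
      have h1 : c a m = ∑ l, c (a * u l * φ 1) (c (v l) m : M) := by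
        apply Subtype.ext
        rw [AddSubgroup.val_finsetSum]
        change φ 1 • a • m = ∑ l, φ 1 • (a * u l * φ 1) • φ 1 • v l • m
        conv_lhs => rw [← key m]
        rw [Finset.smul_sum, Finset.smul_sum]
        refine Finset.sum_congr rfl fun l _ => ?_
        rw [smul_smul (a * u l * φ 1), mul_assoc _ (φ 1) (φ 1), ← map_mul, one_mul]
        simp only [mul_smul]
      rw [h1, map_sum, AddSubgroup.val_finsetSum]
      simp only [f0]
      rw [Finset.smul_sum, Finset.smul_sum]
      refine Finset.sum_congr rfl fun l _ => ?_
      obtain ⟨b, hb⟩ := hsurj (a * u l)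
      have h2 : c (a * u l * φ 1) (c (v l) m : M) = b • c (v l) m := by
        apply Subtype.ext
        rw [corner_coe_smul, hb]
        simp only [c, mul_smul]
      rw [h2, map_smul, corner_coe_smul, hb, mul_smul, mul_smul, mul_smul]
      congr 3
      exact (g' (c (v l) m)).2
    have f0smul : ∀ (a : A) (m : M), f0 (a • m) = a • f0 m := by
      intro a m
      conv_rhs => rw [← key (a • f0 m)]
      refine Finset.sum_congr rfl fun k _ => ?_
      have : c (v k) (a • m) = c (v k * a) m := Subtype.ext (by simp [c, mul_smul])
      rw [this, main, mul_smul]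
    refine ⟨ModuleCat.ofHom ⟨⟨f0, f0add⟩, f0smul⟩, ?_⟩
    refine ModuleCat.hom_ext (LinearMap.ext fun (m : Corner φ M) => ?_)
    apply Subtype.ext
    change f0 (m : M) = (g' m : N)
    have hm : m = c 1 (m : M) := Subtype.ext (by
      change (m : M) = φ 1 • (1 : A) • (m : M)
      rw [one_smul]
      exact m.2.symm)
    rw [show (g' m : N) = φ 1 • f0 (m : M) by conv_lhs => rw [hm, main, one_smul]]
    have : f0 (m : M) = f0 (φ 1 • (m : M)) := congrArg f0 m.2.symm
    rw [← f0smul]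
    exact this⟩
  have hess : (cornerFunctor φ).EssSurj := ⟨by
    intro N
    refine ⟨ModuleCat.of A (Coind φ N), ⟨?_⟩⟩
    exact (LinearEquiv.ofBijective (cornerEval φ N)
      (cornerEval_bijective φ hinj hsurj N)).toModuleIso⟩
  have : (cornerFunctor φ).IsEquivalence := {}
  exact ⟨(cornerFunctor φ).asEquivalence⟩

end MoritaCorner

section HyperoctGroup

/-- The element of the base group `C₂ⁿ` flipping the fibres where `f` is true. -/
def tEl (n : ℕ) (f : Fin n → Bool) : hyperoct n :=
  ⟨Function.Involutive.toPerm (fun x => (x.1, xor x.2 (f x.1))) (by intro x; simp), by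
    rw [hyperoct, Subgroup.mem_centralizer_singleton_iff]
    refine Equiv.ext fun x => ?_
    change (x.1, xor (!x.2) (f x.1)) = (x.1, !(xor x.2 (f x.1)))
    rw [Bool.not_xor]⟩

theorem tEl_apply (n : ℕ) (f : Fin n → Bool) (x : Fin n × Bool) :
    (tEl n f).1 x = (x.1, xor x.2 (f x.1)) := rfl

/-- The top group `Sₙ`. -/
def wHom (n : ℕ) : Equiv.Perm (Fin n) →* hyperoct n where
  toFun σ := ⟨Equiv.prodCongr σ (Equiv.refl Bool), by
    rw [hyperoct, Subgroup.mem_centralizer_singleton_iff]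
    exact Equiv.ext fun x => rfl⟩
  map_one' := by
    apply Subtype.ext
    ext x <;> simp
  map_mul' σ τ := by
    apply Subtype.ext
    ext x <;> simp

theorem wHom_apply (n : ℕ) (σ : Equiv.Perm (Fin n)) (x : Fin n × Bool) :
    (wHom n σ).1 x = (σ x.1, x.2) := rfl

theorem hyperoct_ext {n : ℕ} {g h : hyperoct n} (H : ∀ x, g.1 x = h.1 x) : g = h :=
  Subtype.ext (Equiv.ext H)

theorem hyperoct_mul_apply {n : ℕ} (g h : hyperoct n) (x : Fin n × Bool) :
    (g * h).1 x = g.1 (h.1 x) := rfl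

theorem tEl_mul (n : ℕ) (f g : Fin n → Bool) :
    tEl n f * tEl n g = tEl n (fun j => xor (f j) (g j)) := by
  apply hyperoct_ext
  intro x
  rw [hyperoct_mul_apply]
  simp only [tEl_apply, Prod.mk.injEq, true_and]
  rw [Bool.xor_assoc, Bool.xor_comm (g x.1)]

theorem tEl_false (n : ℕ) : tEl n (fun _ => false) = 1 := by
  apply hyperoct_ext
  intro x
  simp [tEl_apply]

theorem wHom_mul_tEl (n : ℕ) (σ : Equiv.Perm (Fin n)) (f : Fin n → Bool) :
    wHom n σ * tEl n f = tEl n (fun j => f (σ.symm j)) * wHom n σ := by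
  apply hyperoct_ext
  intro x
  simp [hyperoct_mul_apply, tEl_apply, wHom_apply]

theorem tEl_mul_wHom_inj {n : ℕ} {f g : Fin n → Bool} {σ τ : Equiv.Perm (Fin n)}
    (h : tEl n f * wHom n σ = tEl n g * wHom n τ) : f = g ∧ σ = τ := by
  have h1 : ∀ j, σ j = τ j ∧ f (σ j) = g (τ j) := by
    intro j
    have := congrArg (fun q : hyperoct n => q.1 (j, false)) h
    simpa [hyperoct_mul_apply, tEl_apply, wHom_apply] using this
  have h2 : σ = τ := Equiv.ext fun j => (h1 j).1
  subst h2
  refine ⟨funext fun j => ?_, rfl⟩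
  simpa using (h1 (σ.symm j)).2

theorem hyperoct_comm {n : ℕ} (g : hyperoct n) (j : Fin n) (b : Bool) :
    g.1 (j, !b) = ((g.1 (j, b)).1, !(g.1 (j, b)).2) := by
  have h : g.1 ∈ Subgroup.centralizer {barPerm n} := g.2
  rw [Subgroup.mem_centralizer_singleton_iff] at h
  exact congrArg (fun q : Equiv.Perm (Fin n × Bool) => q (j, b)) h

theorem hyperoct_fst {n : ℕ} (g : hyperoct n) (j : Fin n) (b : Bool) :
    (g.1 (j, b)).1 = (g.1 (j, false)).1 := by
  cases b
  · rfl
  · have := hyperoct_comm g j false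
    simp only [Bool.not_false] at this
    rw [this]

theorem hyperoct_snd {n : ℕ} (g : hyperoct n) (j : Fin n) (b : Bool) :
    (g.1 (j, b)).2 = xor b (g.1 (j, false)).2 := by
  cases b
  · simp
  · have := hyperoct_comm g j false
    simp only [Bool.not_false] at this
    rw [this]
    simp

theorem hyperoct_exists {n : ℕ} (g : hyperoct n) : ∃ f σ, g = tEl n f * wHom n σ := by
  let s : Fin n → Fin n := fun j => (g.1 (j, false)).1
  have hs : Function.Injective s := by
    intro j k hjk
    have h1 : g.1 (j, (g.1 (j, false)).2) = g.1 (k, (g.1 (k, false)).2) := by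
      apply Prod.ext
      · rw [hyperoct_fst, hyperoct_fst g k]
        exact hjk
      · rw [hyperoct_snd, hyperoct_snd g k]
        simp
    have := g.1.injective h1
    exact (Prod.ext_iff.1 this).1
  let σ : Equiv.Perm (Fin n) := Equiv.ofBijective s (Finite.injective_iff_bijective.1 hs)
  refine ⟨fun j => (g.1 (σ.symm j, false)).2, σ, hyperoct_ext ?_⟩
  rintro ⟨j, b⟩
  rw [hyperoct_mul_apply]
  apply Prod.ext
  · rw [hyperoct_fst]
    rfl
  · rw [hyperoct_snd]
    simp [tEl_apply, wHom_apply]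

end HyperoctGroup

section YoungCombinatorics

/-- The equivalence `Fin i ⊕ Fin (n - i) ≃ Fin n`. -/
def youngEquiv (n : ℕ) (i : Fin (n + 1)) : Fin (i : ℕ) ⊕ Fin (n - (i : ℕ)) ≃ Fin n :=
  finSumFinEquiv.trans (finCongr (by have := i.2; omega))

/-- The embedding of the Young subgroup. -/
def youngHom (n : ℕ) (i : Fin (n + 1)) :
    Equiv.Perm (Fin (i : ℕ)) × Equiv.Perm (Fin (n - (i : ℕ))) →* Equiv.Perm (Fin n) :=
  ((youngEquiv n i).permCongrHom.toMonoidHom).comp (Equiv.Perm.sumCongrHom _ _)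

theorem youngHom_injective (n : ℕ) (i : Fin (n + 1)) : Function.Injective (youngHom n i) := by
  unfold youngHom
  exact (youngEquiv n i).permCongrHom.injective.comp Equiv.Perm.sumCongrHom_injective

/-- The representative of the `i`-th orbit. -/
def xRep (n : ℕ) (i : Fin (n + 1)) : Fin n → Bool := fun j => decide ((j : ℕ) < i)

theorem xRep_youngEquiv_inl (n : ℕ) (i : Fin (n + 1)) (a : Fin (i : ℕ)) :
    xRep n i (youngEquiv n i (Sum.inl a)) = true := by
  simp [xRep, youngEquiv]

theorem xRep_youngEquiv_inr (n : ℕ) (i : Fin (n + 1)) (a : Fin (n - (i : ℕ))) :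
    xRep n i (youngEquiv n i (Sum.inr a)) = false := by
  simp [xRep, youngEquiv]

theorem xRep_young (n : ℕ) (i : Fin (n + 1))
    (s : Equiv.Perm (Fin (i : ℕ)) × Equiv.Perm (Fin (n - (i : ℕ)))) (j : Fin n) :
    xRep n i (youngHom n i s j) = xRep n i j := by
  obtain ⟨y, rfl⟩ := (youngEquiv n i).surjective j
  have : youngHom n i s (youngEquiv n i y) = youngEquiv n i (Sum.map s.1 s.2 y) := by
    simp [youngHom, Equiv.permCongrHom]
  rw [this]
  rcases y with a | a
  · rw [Sum.map_inl, xRep_youngEquiv_inl, xRep_youngEquiv_inl]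
  · rw [Sum.map_inr, xRep_youngEquiv_inr, xRep_youngEquiv_inr]

theorem xRep_young_symm (n : ℕ) (i : Fin (n + 1))
    (s : Equiv.Perm (Fin (i : ℕ)) × Equiv.Perm (Fin (n - (i : ℕ)))) (j : Fin n) :
    xRep n i ((youngHom n i s).symm j) = xRep n i j := by
  rw [← xRep_young n i s, Equiv.apply_symm_apply]

theorem exists_young (n : ℕ) (i : Fin (n + 1)) (σ : Equiv.Perm (Fin n))
    (h : ∀ j, xRep n i (σ j) = xRep n i j) : ∃ s, youngHom n i s = σ := by
  let e := youngEquiv n i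
  have h1 : e.permCongrHom.symm σ ∈ (Equiv.Perm.sumCongrHom _ _).range := by
    apply Equiv.Perm.mem_sumCongrHom_range_of_perm_mapsTo_inl
    rintro _ ⟨a, rfl⟩
    have h2 : e (e.permCongrHom.symm σ (Sum.inl a)) = σ (e (Sum.inl a)) := by
      simp [Equiv.permCongrHom]
    have h3 := h (e (Sum.inl a))
    rw [← h2, xRep_youngEquiv_inl] at h3
    rcases hy : e.permCongrHom.symm σ (Sum.inl a) with b | b
    · exact ⟨b, rfl⟩
    · rw [hy, xRep_youngEquiv_inr] at h3
      cases h3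
  obtain ⟨s, hs⟩ := h1
  refine ⟨s, ?_⟩
  change e.permCongrHom (Equiv.Perm.sumCongrHom _ _ s) = σ
  rw [hs, MulEquiv.apply_symm_apply]

theorem xRep_card (n : ℕ) (i : Fin (n + 1)) :
    Fintype.card {j : Fin n // xRep n i j = true} = i := by
  have h1 : Fintype.card {j : Fin n // xRep n i j = true} = Fintype.card (Fin (i : ℕ)) := by
    refine (Fintype.card_congr (Equiv.ofBijective
      (fun a : Fin (i : ℕ) => (⟨youngEquiv n i (Sum.inl a), xRep_youngEquiv_inl n i a⟩ :
        {j : Fin n // xRep n i j = true})) ⟨?_, ?_⟩)).symm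
    · intro a b hab
      simpa using hab
    · rintro ⟨j, hj⟩
      obtain ⟨y, rfl⟩ := (youngEquiv n i).surjective j
      rcases y with a | a
      · exact ⟨a, rfl⟩
      · rw [xRep_youngEquiv_inr] at hj
        cases hj
  rw [h1, Fintype.card_fin]

theorem xRep_orbit (n : ℕ) (i k : Fin (n + 1)) (σ : Equiv.Perm (Fin n))
    (h : ∀ j, xRep n i (σ j) = xRep n k j) : i = k := by
  apply Fin.ext
  rw [← xRep_card n i, ← xRep_card n k]
  exact (Fintype.card_congr (σ.subtypeEquiv fun j => by rw [h])).symm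

theorem exists_orbit (n : ℕ) (x : Fin n → Bool) :
    ∃ (i : Fin (n + 1)) (σ : Equiv.Perm (Fin n)), ∀ j, xRep n i (σ.symm j) = x j := by
  have hc : Fintype.card {j // x j = true} < n + 1 := by
    have := Fintype.card_subtype_le (fun j => x j = true)
    rw [Fintype.card_fin] at this
    omega
  let i : Fin (n + 1) := ⟨_, hc⟩
  have e : {j // x j = true} ≃ {j // xRep n i j = true} :=
    Fintype.equivOfCardEq (xRep_card n i).symm
  refine ⟨i, (e.extendSubtype).symm, fun j => ?_⟩
  rw [Equiv.symm_symm]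
  by_cases hj : x j = true
  · rw [e.extendSubtype_mem j hj, hj]
  · have := e.extendSubtype_not_mem j hj
    rw [Bool.not_eq_true] at this hj
    rw [this, hj]

end YoungCombinatorics

section HyperoctAlgebra

variable (F : Type) [Field F]

/-- The sign attached to a pair of booleans. -/
def bsgn (a b : Bool) : F := if a && b then -1 else 1

theorem bsgn_comm (a b : Bool) : bsgn F a b = bsgn F b a := by
  cases a <;> cases b <;> rfl

theorem bsgn_xor (a b c : Bool) : bsgn F a (xor b c) = bsgn F a b * bsgn F a c := by
  cases a <;> cases b <;> cases c <;> simp [bsgn]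

theorem bsgn_xor_left (a b c : Bool) : bsgn F (xor a b) c = bsgn F a c * bsgn F b c := by
  cases a <;> cases b <;> cases c <;> simp [bsgn]

/-- The linear character of `C₂ⁿ` attached to `x`. -/
def chr {n : ℕ} (x f : Fin n → Bool) : F := ∏ j, bsgn F (x j) (f j)

theorem chr_comm {n : ℕ} (x f : Fin n → Bool) : chr F x f = chr F f x := by
  unfold chr
  exact Finset.prod_congr rfl fun j _ => bsgn_comm F _ _

theorem chr_xor {n : ℕ} (x f g : Fin n → Bool) :
    chr F x (fun j => xor (f j) (g j)) = chr F x f * chr F x g := by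
  unfold chr
  rw [← Finset.prod_mul_distrib]
  exact Finset.prod_congr rfl fun j _ => bsgn_xor F _ _ _

theorem chr_xor_left {n : ℕ} (x y f : Fin n → Bool) :
    chr F (fun j => xor (x j) (y j)) f = chr F x f * chr F y f := by
  rw [chr_comm, chr_xor, chr_comm F x, chr_comm F y]

theorem chr_perm {n : ℕ} (x f : Fin n → Bool) (σ : Equiv.Perm (Fin n)) :
    chr F (fun j => x (σ j)) (fun j => f (σ j)) = chr F x f := by
  unfold chr
  exact Equiv.prod_comp σ (fun j => bsgn F (x j) (f j))

theorem chr_false {n : ℕ} (x : Fin n → Bool) : chr F x (fun _ => false) = 1 := by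
  simp [chr, bsgn]

theorem chr_sum {n : ℕ} (x : Fin n → Bool) :
    ∑ f : Fin n → Bool, chr F x f = if x = (fun _ => false) then (2 : F) ^ n else 0 := by
  unfold chr
  rw [← Fintype.prod_sum (fun j b => bsgn F (x j) b)]
  split_ifs with h
  · subst h
    simp [bsgn]
  · obtain ⟨j, hj⟩ := Function.ne_iff.1 h
    apply Finset.prod_eq_zero (Finset.mem_univ j)
    simp only [ne_eq, Bool.not_eq_false] at hj
    simp [bsgn, hj]

theorem chr_orth {n : ℕ} (x y : Fin n → Bool) :
    ∑ f : Fin n → Bool, chr F x f * chr F y f = if x = y then (2 : F) ^ n else 0 := by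
  simp only [← chr_xor_left]
  rw [chr_sum]
  congr 1
  simp [funext_iff]

open MonoidAlgebra

/-- The primitive idempotents of `F[C₂ⁿ]` inside `F[C₂ ≀ Sₙ]`. -/
noncomputable def idem {n : ℕ} (x : Fin n → Bool) : MonoidAlgebra F (hyperoct n) :=
  ((2 : F) ^ n)⁻¹ • ∑ f : Fin n → Bool, chr F x f • of F (hyperoct n) (tEl n f)

variable {F}

theorem tEl_idem {n : ℕ} (x f : Fin n → Bool) :
    of F (hyperoct n) (tEl n f) * idem F x = chr F x f • idem F x := by
  unfold idem
  rw [mul_smul_comm, smul_comm (chr F x f)]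
  congr 1
  rw [Finset.mul_sum, Finset.smul_sum]
  let X : Equiv.Perm (Fin n → Bool) :=
    Function.Involutive.toPerm (fun g j => xor (f j) (g j)) (by
      intro g
      funext j
      simp [← Bool.xor_assoc])
  rw [← Equiv.sum_comp X (fun g => chr F x f • chr F x g • of F (hyperoct n) (tEl n g))]
  refine Finset.sum_congr rfl fun g _ => ?_
  have hX : X g = fun j => xor (f j) (g j) := rfl
  rw [hX, mul_smul_comm, ← map_mul, tEl_mul, chr_xor, smul_smul, ← mul_assoc, ← chr_xor]
  simp [chr_false]

theorem idem_mul (h2 : (2 : F) ≠ 0) {n : ℕ} (x y : Fin n → Bool) :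
    idem F x * idem F y = if x = y then idem F y else 0 := by
  conv_lhs => enter [1]; unfold idem
  rw [smul_mul_assoc, Finset.sum_mul]
  simp only [smul_mul_assoc, tEl_idem, smul_smul]
  rw [← Finset.sum_smul, chr_orth, smul_smul]
  split_ifs
  · rw [inv_mul_cancel₀ (pow_ne_zero n h2), one_smul]
  · simp

theorem idem_sum (h2 : (2 : F) ≠ 0) (n : ℕ) : ∑ x : Fin n → Bool, idem F x = 1 := by
  unfold idem
  rw [← Finset.smul_sum, Finset.sum_comm]
  simp only [← Finset.sum_smul]
  have : ∀ f : Fin n → Bool, ∑ x : Fin n → Bool, chr F x f =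
      if f = (fun _ => false) then (2 : F) ^ n else 0 := by
    intro f
    rw [← chr_sum]
    exact Finset.sum_congr rfl fun x _ => chr_comm F _ _
  simp only [this, ite_smul, zero_smul, Finset.sum_ite_eq', Finset.mem_univ, if_true]
  rw [smul_smul, inv_mul_cancel₀ (pow_ne_zero n h2), one_smul, tEl_false, map_one]

theorem wHom_idem {n : ℕ} (σ : Equiv.Perm (Fin n)) (x : Fin n → Bool) :
    of F (hyperoct n) (wHom n σ) * idem F x =
      idem F (fun j => x (σ.symm j)) * of F (hyperoct n) (wHom n σ) := by
  unfold idem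
  rw [mul_smul_comm, smul_mul_assoc]
  congr 1
  rw [Finset.mul_sum, Finset.sum_mul]
  rw [← Equiv.sum_comp (Equiv.arrowCongr σ (Equiv.refl Bool))
    (fun f => chr F (fun j => x (σ.symm j)) f • of F (hyperoct n) (tEl n f) *
      of F (hyperoct n) (wHom n σ))]
  refine Finset.sum_congr rfl fun f _ => ?_
  have hX : Equiv.arrowCongr σ (Equiv.refl Bool) f = fun j => f (σ.symm j) := rfl
  rw [hX, chr_perm F x f σ.symm, mul_smul_comm, smul_mul_assoc, ← map_mul, ← map_mul,
    wHom_mul_tEl]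

/-- The algebra map `F[Sᵢ × Sₙ₋ᵢ] → F[C₂ ≀ Sₙ]`. -/
noncomputable def youngAlg (F : Type) [Field F] (n : ℕ) (i : Fin (n + 1)) :
    MonoidAlgebra F (Equiv.Perm (Fin (i : ℕ)) × Equiv.Perm (Fin (n - (i : ℕ)))) →ₐ[F]
      MonoidAlgebra F (hyperoct n) :=
  MonoidAlgebra.lift F _ _ ((of F (hyperoct n)).comp ((wHom n).comp (youngHom n i)))

theorem youngAlg_single (n : ℕ) (i : Fin (n + 1))
    (s : Equiv.Perm (Fin (i : ℕ)) × Equiv.Perm (Fin (n - (i : ℕ)))) (r : F) :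
    youngAlg F n i (single s r) = r • of F (hyperoct n) (wHom n (youngHom n i s)) := by
  simp [youngAlg]

theorem youngAlg_idem (n : ℕ) (i : Fin (n + 1))
    (b : MonoidAlgebra F (Equiv.Perm (Fin (i : ℕ)) × Equiv.Perm (Fin (n - (i : ℕ))))) :
    youngAlg F n i b * idem F (xRep n i) = idem F (xRep n i) * youngAlg F n i b := by
  induction b using MonoidAlgebra.induction_linear with
  | zero => simp
  | add f g hf hg => rw [map_add, add_mul, mul_add, hf, hg]
  | single s r =>
    rw [youngAlg_single, smul_mul_assoc, mul_smul_comm, wHom_idem]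
    simp only [xRep_young_symm]

theorem coeff_idem_youngAlg (n : ℕ) (i : Fin (n + 1))
    (b : MonoidAlgebra F (Equiv.Perm (Fin (i : ℕ)) × Equiv.Perm (Fin (n - (i : ℕ)))))
    (s : Equiv.Perm (Fin (i : ℕ)) × Equiv.Perm (Fin (n - (i : ℕ)))) :
    (idem F (xRep n i) * youngAlg F n i b).coeff (wHom n (youngHom n i s)) =
      ((2 : F) ^ n)⁻¹ * b.coeff s := by
  classical
  induction b using MonoidAlgebra.induction_linear with
  | zero => simp
  | add f g hf hg => rw [map_add, mul_add, coeff_add, Finsupp.add_apply, hf, hg, coeff_add,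
      Finsupp.add_apply, mul_add]
  | single t r =>
    rw [youngAlg_single]
    unfold idem
    rw [smul_mul_assoc, mul_smul_comm, Finset.sum_mul, coeff_smul, Finsupp.smul_apply,
      smul_eq_mul, coeff_smul, Finsupp.smul_apply, smul_eq_mul]
    congr 1
    simp only [smul_mul_assoc, ← map_mul]
    have key : ∀ f : Fin n → Bool,
        (tEl n f * wHom n (youngHom n i t) = wHom n (youngHom n i s)) ↔
          ((fun _ => false) = f ∧ t = s) := by
      intro f
      constructor
      · intro h
        rw [← one_mul (wHom n (youngHom n i s)), ← tEl_false] at h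
        obtain ⟨h1, h2⟩ := tEl_mul_wHom_inj h
        exact ⟨h1.symm, youngHom_injective n i h2⟩
      · rintro ⟨rfl, rfl⟩
        rw [tEl_false, one_mul]
    rw [coeff_sum, Finsupp.finsetSum_apply]
    simp only [coeff_smul, Finsupp.smul_apply, of_apply, coeff_single, Finsupp.single_apply, key,
      smul_eq_mul]
    by_cases hts : t = s <;> simp [hts, chr_false]

/-- The corner embedding. -/
noncomputable def cornerEmb (h2 : (2 : F) ≠ 0) (n : ℕ) :
    (Π i : Fin (n + 1),
      MonoidAlgebra F (Equiv.Perm (Fin (i : ℕ)) × Equiv.Perm (Fin (n - (i : ℕ))))) →ₙ+*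
      MonoidAlgebra F (hyperoct n) where
  toFun b := ∑ i, idem F (xRep n i) * youngAlg F n i (b i)
  map_zero' := by simp
  map_add' b c := by simp [mul_add, Finset.sum_add_distrib]
  map_mul' b c := by
    rw [Finset.sum_mul_sum]
    refine Finset.sum_congr rfl fun i _ => ?_
    have hx : ∀ j, xRep n i = xRep n j → i = j := fun j h =>
      xRep_orbit n i j 1 fun k => by rw [h]; rfl
    have : ∀ j, idem F (xRep n i) * youngAlg F n i (b i) *
        (idem F (xRep n j) * youngAlg F n j (c j)) =
        youngAlg F n i (b i) * (idem F (xRep n i) * idem F (xRep n j)) * youngAlg F n j (c j) := by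
      intro j
      rw [← youngAlg_idem]
      simp only [mul_assoc]
    rw [Finset.sum_eq_single i]
    · rw [this, idem_mul h2, if_pos rfl, youngAlg_idem, Pi.mul_apply, map_mul, mul_assoc]
    · intro j _ hj
      rw [this, idem_mul h2, if_neg (fun h => hj (hx j h).symm), mul_zero, zero_mul]
    · simp

theorem cornerEmb_apply (h2 : (2 : F) ≠ 0) (n : ℕ) (b : Π i : Fin (n + 1),
      MonoidAlgebra F (Equiv.Perm (Fin (i : ℕ)) × Equiv.Perm (Fin (n - (i : ℕ))))) :
    cornerEmb h2 n b = ∑ i, idem F (xRep n i) * youngAlg F n i (b i) := rfl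

theorem cornerEmb_one (h2 : (2 : F) ≠ 0) (n : ℕ) :
    cornerEmb h2 n 1 = ∑ i, idem F (xRep n i) := by
  simp [cornerEmb_apply]

theorem xRep_inj {n : ℕ} {i j : Fin (n + 1)} (h : xRep n i = xRep n j) : i = j :=
  xRep_orbit n i j 1 fun k => by rw [h]; rfl

theorem idem_mul_cornerEmb (h2 : (2 : F) ≠ 0) (n : ℕ) (b : Π i : Fin (n + 1),
      MonoidAlgebra F (Equiv.Perm (Fin (i : ℕ)) × Equiv.Perm (Fin (n - (i : ℕ)))))
    (j : Fin (n + 1)) :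
    idem F (xRep n j) * cornerEmb h2 n b = idem F (xRep n j) * youngAlg F n j (b j) := by
  rw [cornerEmb_apply, Finset.mul_sum, Finset.sum_eq_single j]
  · rw [← mul_assoc, idem_mul h2, if_pos rfl]
  · intro i _ hi
    rw [← mul_assoc, idem_mul h2, if_neg (fun h => hi (xRep_inj h).symm), zero_mul]
  · simp

theorem cornerEmb_injective (h2 : (2 : F) ≠ 0) (n : ℕ) :
    Function.Injective (cornerEmb h2 n) := by
  rw [injective_iff_map_eq_zero]
  intro b hb
  funext j
  ext s
  have h := coeff_idem_youngAlg n j (b j) s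
  rw [← idem_mul_cornerEmb h2, hb, mul_zero, coeff_zero, Finsupp.zero_apply] at h
  have := (mul_eq_zero.1 h.symm).resolve_left (inv_ne_zero (pow_ne_zero n h2))
  simpa using this

theorem idem_group_idem (h2 : (2 : F) ≠ 0) (n : ℕ) (i j : Fin (n + 1)) (g : hyperoct n) (r : F) :
    ∃ b, cornerEmb h2 n b = idem F (xRep n i) * single g r * idem F (xRep n j) := by
  classical
  obtain ⟨f, σ, rfl⟩ := hyperoct_exists g
  have h1 : idem F (xRep n i) * single (tEl n f * wHom n σ) r * idem F (xRep n j) =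
      (r * chr F (fun k => xRep n j (σ.symm k)) f) •
        (idem F (xRep n i) * idem F (fun k => xRep n j (σ.symm k)) *
          of F (hyperoct n) (wHom n σ)) := by
    have : single (tEl n f * wHom n σ) r =
        r • (of F (hyperoct n) (tEl n f) * of F (hyperoct n) (wHom n σ)) := by
      simp
    rw [this, mul_smul_comm, smul_mul_assoc, mul_assoc, mul_assoc, wHom_idem, ← mul_assoc (of F _ _),
      tEl_idem, smul_mul_assoc, mul_smul_comm, smul_smul, mul_assoc]
  rw [h1, idem_mul h2]
  split_ifs with hx
  · have hij : j = i := xRep_orbit n j i σ.symm fun k => (congrFun hx k).symm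
    subst hij
    obtain ⟨s, rfl⟩ := exists_young n j σ fun k => by
      have := congrFun hx (σ k)
      simpa using this
    refine ⟨Pi.single j (single s (r * chr F (fun k => xRep n j ((youngHom n j s).symm k)) f)), ?_⟩
    rw [cornerEmb_apply, Finset.sum_eq_single j]
    · rw [Pi.single_eq_same, youngAlg_single, mul_smul_comm, ← hx]
    · intro k _ hk
      rw [Pi.single_eq_of_ne hk, map_zero, mul_zero]
    · simp
  · exact ⟨0, by simp⟩

theorem cornerEmb_surj (h2 : (2 : F) ≠ 0) (n : ℕ) (a : MonoidAlgebra F (hyperoct n)) :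
    ∃ b, cornerEmb h2 n b = cornerEmb h2 n 1 * a * cornerEmb h2 n 1 := by
  induction a using MonoidAlgebra.induction_linear with
  | zero => exact ⟨0, by simp⟩
  | add f g hf hg =>
    obtain ⟨b, hb⟩ := hf
    obtain ⟨c, hc⟩ := hg
    exact ⟨b + c, by rw [map_add, hb, hc, mul_add, add_mul]⟩
  | single g r =>
    choose b hb using fun i j => idem_group_idem h2 n i j g r
    refine ⟨∑ i, ∑ j, b i j, ?_⟩
    rw [map_sum]
    simp only [map_sum, hb]
    rw [cornerEmb_one, Finset.sum_mul, Finset.sum_mul]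
    simp only [Finset.mul_sum]

theorem cornerEmb_full (h2 : (2 : F) ≠ 0) (n : ℕ) :
    ∃ u v : (Fin n → Bool) → MonoidAlgebra F (hyperoct n),
      ∑ x, u x * cornerEmb h2 n 1 * v x = 1 := by
  choose i σ hσ using exists_orbit n
  refine ⟨fun x => of F (hyperoct n) (wHom n (σ x)) * idem F (xRep n (i x)),
    fun x => of F (hyperoct n) (wHom n (σ x)⁻¹), ?_⟩
  rw [← idem_sum h2 n]
  refine Finset.sum_congr rfl fun x _ => ?_
  rw [mul_assoc (of F _ _), idem_mul_cornerEmb, Pi.one_apply, map_one, mul_one, wHom_idem, mul_assoc,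
    ← map_mul, ← map_mul, mul_inv_cancel, map_one, map_one, mul_one]
  congr 1
  funext j
  exact hσ x j

end HyperoctAlgebra

/-- `F[C₂ ≀ Sₙ]` is Morita equivalent to `⊕_{i=0}^n F[Sᵢ × S_{n-i}]`. -/
theorem morita_hyperoctahedral (F : Type) [Field F] (p : ℕ) (hp : p.Prime)
    (hodd : Odd p) [CharP F p] (n : ℕ) :
    Nonempty
      (ModuleCat.{0} (MonoidAlgebra F (hyperoct n)) ≌
        ModuleCat.{0}
          (Π i : Fin (n + 1),
            MonoidAlgebra F (Equiv.Perm (Fin (i : ℕ)) × Equiv.Perm (Fin (n - (i : ℕ)))))) := by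
  have h2 : (2 : F) ≠ 0 := by
    intro h
    have h3 : p ∣ 2 := (CharP.cast_eq_zero_iff F p 2).1 (by exact_mod_cast h)
    have h4 : p = 2 := (Nat.prime_dvd_prime_iff_eq hp Nat.prime_two).1 h3
    subst h4
    exact absurd hodd (by decide)
  obtain ⟨u, v, huv⟩ := cornerEmb_full h2 n
  exact corner_morita (cornerEmb h2 n) (cornerEmb_injective h2 n) (cornerEmb_surj h2 n) u v huv
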